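/- Let n ≥ 4 and let x and y be points of the interior of Δ_{n,2} (i.e., ∑ x_i = ∑ y_i = 2 and all coordinates of x and y lie strictly between 0 and 1). Then x and y belong to the relative interiors of exactly the same admissible polytopes of G_{n,2} if and only if for every subset S ⊆ {1,…,n} with 2 ≤ |S| ≤ n−2 one has: ∑_{i∈S} x_i < 1 ⟺ ∑_{i∈S} y_i < 1, and ∑_{i∈S} x_i = 1 ⟺ ∑_{i∈S} y_i = 1. (Equivalently, the chamber decomposition of the interior of Δ_{n,2} determined by intersecting the relative interiors of all admissible polytopes coincides with the decomposition induced by the hyperplane arrangement {∑_{i∈S} x_i = 1 : 2 ≤ |S| ≤ n−2}.) -/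

import Mathlib

/-- The hypersimplex `Δ_{n,k} ⊂ ℝ^n`. -/
def hypersimplex (n k : ℕ) : Set (Fin n → ℝ) :=
  {x | (∀ i, 0 ≤ x i ∧ x i ≤ 1) ∧ ∑ i, x i = (k : ℝ)}

/-- The Plücker coordinate `P^{ij}(A) = A_{i1}A_{j2} − A_{j1}A_{i2}` of an
n×2 complex matrix. -/
def plucker {n : ℕ} (A : Matrix (Fin n) (Fin 2) ℂ) (i j : Fin n) : ℂ :=
  A i 0 * A j 1 - A j 0 * A i 1

/-- The Plücker support `σ(A) = {{i,j} : P^{ij}(A) ≠ 0}` of an n×2 matrix. -/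
def pluckerSupport {n : ℕ} (A : Matrix (Fin n) (Fin 2) ℂ) : Set (Finset (Fin n)) :=
  {p | ∃ i j : Fin n, i ≠ j ∧ p = {i, j} ∧ plucker A i j ≠ 0}

/-- A set `σ` of 2-element subsets of `{1,…,n}` is admissible for `G_{n,2}`
if it is the Plücker support of some rank-2 complex n×2 matrix. -/
def IsAdmissible {n : ℕ} (σ : Set (Finset (Fin n))) : Prop :=
  ∃ A : Matrix (Fin n) (Fin 2) ℂ, A.rank = 2 ∧ pluckerSupport A = σ

/-- The 0/1 vertex `Λ_p = ∑_{i∈p} e_i` of the hypersimplex associated with a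
subset `p` of indices. -/
def vertexOf {n : ℕ} (p : Finset (Fin n)) : Fin n → ℝ :=
  fun i => if i ∈ p then 1 else 0

/-- The admissible polytope `P_σ = conv{e_i + e_j : {i,j} ∈ σ}`. -/
def admPolytope {n : ℕ} (σ : Set (Finset (Fin n))) : Set (Fin n → ℝ) :=
  convexHull ℝ (vertexOf '' σ)

section helpers

open Finset Filter Topology

theorem mem_relint_iff {n : ℕ} (s : Set (Fin n → ℝ)) (x : Fin n → ℝ) :
    x ∈ intrinsicInterior ℝ s ↔ x ∈ affineSpan ℝ s ∧
      ∃ ε > 0, ∀ z ∈ affineSpan ℝ s, dist z x < ε → z ∈ s := by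
  rw [mem_intrinsicInterior]
  constructor
  · rintro ⟨y, hy, rfl⟩
    refine ⟨y.2, ?_⟩
    rw [mem_interior_iff_mem_nhds, Metric.mem_nhds_iff] at hy
    obtain ⟨ε, hε, h⟩ := hy
    refine ⟨ε, hε, fun z hz hd => ?_⟩
    exact h (show (⟨z, hz⟩ : affineSpan ℝ s) ∈ Metric.ball y ε from hd)
  · rintro ⟨hx, ε, hε, h⟩
    refine ⟨⟨x, hx⟩, ?_, rfl⟩
    rw [mem_interior_iff_mem_nhds, Metric.mem_nhds_iff]
    exact ⟨ε, hε, fun z hz => h z z.2 hz⟩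

theorem relint_extend {n : ℕ} {s : Set (Fin n → ℝ)} {x z : Fin n → ℝ}
    (hx : x ∈ intrinsicInterior ℝ s) (hz : z ∈ s) :
    ∃ t : ℝ, 0 < t ∧ x + t • (x - z) ∈ s := by
  rw [mem_relint_iff] at hx
  obtain ⟨hx, ε, hε, h⟩ := hx
  have hc : Tendsto (fun t : ℝ => x + t • (x - z)) (𝓝[>] 0) (𝓝 x) := by
    have : Continuous (fun t : ℝ => x + t • (x - z)) := by fun_prop
    have h2 := this.tendsto 0
    simp only [zero_smul, add_zero] at h2
    exact h2.mono_left nhdsWithin_le_nhds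
  have h1 := hc.eventually (Metric.ball_mem_nhds x hε)
  obtain ⟨t, ht, ht0⟩ := (h1.and self_mem_nhdsWithin).exists
  refine ⟨t, ht0, h _ ?_ ht⟩
  have := AffineMap.lineMap_mem (-t) hx (subset_affineSpan ℝ s hz)
  convert this using 1
  ext i
  simp [AffineMap.lineMap_apply]
  ring

theorem relint_of_extend {n : ℕ} {s : Set (Fin n → ℝ)} (hs : Convex ℝ s) {x w : Fin n → ℝ}
    (hw : w ∈ intrinsicInterior ℝ s) (hxs : x ∈ s) (t : ℝ) (ht : 0 < t)
    (hu : x + t • (x - w) ∈ s) : x ∈ intrinsicInterior ℝ s := by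
  rw [mem_relint_iff] at hw ⊢
  obtain ⟨hw, ε, hε, h⟩ := hw
  refine ⟨subset_affineSpan ℝ s hxs, ε * (t / (1 + t)), by positivity, fun z hz hd => ?_⟩
  have hw' : w + ((1 + t) / t) • (z - x) ∈ s := by
    apply h
    · have := AffineMap.lineMap_mem ((1 + t) / t) (subset_affineSpan ℝ s hu) hz
      convert this using 1
      ext i
      simp [AffineMap.lineMap_apply]
      field_simp
      ring
    · rw [dist_eq_norm] at hd ⊢
      rw [add_sub_cancel_left, norm_smul, Real.norm_of_nonneg (by positivity)]
      calc (1 + t) / t * ‖z - x‖ < (1 + t) / t * (ε * (t / (1 + t))) := by gcongr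
        _ = ε := by field_simp
  have := hs hu hw' (a := 1 / (1 + t)) (b := t / (1 + t)) (by positivity) (by positivity)
    (by field_simp)
  convert this using 1
  ext i
  simp
  field_simp
  ring

noncomputable def cls {n : ℕ} (A : Matrix (Fin n) (Fin 2) ℂ) (i : Fin n) : Finset (Fin n) :=
  @Finset.filter _ (fun j => plucker A i j = 0) (Classical.decPred _) univ

theorem mem_cls {n : ℕ} (A : Matrix (Fin n) (Fin 2) ℂ) (i j : Fin n) :
    j ∈ cls A i ↔ plucker A i j = 0 := by
  simp [cls]

/-- every supported pair meets the class of `i` exactly once -/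
def Tight {n : ℕ} (A : Matrix (Fin n) (Fin 2) ℂ) (i : Fin n) : Prop :=
  ∀ j k, plucker A j k ≠ 0 → (j ∈ cls A i ∨ k ∈ cls A i)

theorem plucker_ne {n : ℕ} {A : Matrix (Fin n) (Fin 2) ℂ} {i j : Fin n}
    (h : plucker A i j ≠ 0) : i ≠ j := by
  rintro rfl
  apply h
  simp [plucker]

theorem sum_vertexOf {n : ℕ} (f : Fin n → ℝ) {i j : Fin n} (h : i ≠ j) :
    ∑ k, f k * vertexOf ({i, j} : Finset (Fin n)) k = f i + f j := by
  simp only [vertexOf, mul_ite, mul_one, mul_zero]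
  rw [← Finset.sum_filter]
  rw [show (univ.filter fun k => k ∈ ({i, j} : Finset (Fin n))) = {i, j} by ext; simp]
  rw [Finset.sum_pair h]

theorem sum_finset_eq {n : ℕ} (S : Finset (Fin n)) (x : Fin n → ℝ) :
    ∑ i ∈ S, x i = ∑ i, (if i ∈ S then (1 : ℝ) else 0) * x i := by
  simp

theorem poly_le {n : ℕ} (A : Matrix (Fin n) (Fin 2) ℂ) (f : Fin n → ℝ) (b : ℝ)
    (h : ∀ i j, plucker A i j ≠ 0 → f i + f j ≤ b) {u : Fin n → ℝ}
    (hu : u ∈ admPolytope (pluckerSupport A)) : ∑ k, f k * u k ≤ b := by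
  have hc : Convex ℝ {u : Fin n → ℝ | ∑ k, f k * u k ≤ b} := by
    apply convex_halfSpace_le
    constructor
    · intro u v; simp [mul_add, Finset.sum_add_distrib]
    · intro c u; simp [Finset.mul_sum]; congr 1; ext; ring
  refine convexHull_min ?_ hc hu
  rintro _ ⟨p, ⟨i, j, hij, rfl, hp⟩, rfl⟩
  simp only [Set.mem_ofPred_eq, sum_vertexOf f hij]
  exact h i j hp

theorem poly_eq {n : ℕ} (A : Matrix (Fin n) (Fin 2) ℂ) (f : Fin n → ℝ) (b : ℝ)
    (h : ∀ i j, plucker A i j ≠ 0 → f i + f j = b) {u : Fin n → ℝ}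
    (hu : u ∈ admPolytope (pluckerSupport A)) : ∑ k, f k * u k = b := by
  apply le_antisymm
  · exact poly_le A f b (fun i j hh => (h i j hh).le) hu
  · have := poly_le A (fun k => - f k) (-b) (fun i j hh => by linarith [h i j hh]) hu
    simp only [neg_mul, Finset.sum_neg_distrib] at this
    linarith

theorem not_both {n : ℕ} {A : Matrix (Fin n) (Fin 2) ℂ} {i j k : Fin n}
    (hi : A i ≠ 0) (h1 : j ∈ cls A i) (h2 : k ∈ cls A i) : plucker A j k = 0 := by
  rw [mem_cls] at h1 h2
  simp only [plucker] at *
  by_cases h0 : A i 0 = 0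
  · have h01 : A i 1 ≠ 0 := by
      intro h
      apply hi
      ext q
      fin_cases q <;> simp [h0, h]
    apply mul_left_cancel₀ h01
    linear_combination (A j 1) * h2 - A k 1 * h1
  · apply mul_left_cancel₀ h0
    linear_combination (A j 0) * h2 - A k 0 * h1

theorem mem_poly {n : ℕ} (A : Matrix (Fin n) (Fin 2) ℂ) (u : Fin n → ℝ)
    (hsum : ∑ i, u i = 2) (h0 : ∀ i, 0 ≤ u i) (h1 : ∀ i, ∑ j ∈ cls A i, u j ≤ 1) :
    u ∈ admPolytope (pluckerSupport A) := by
  by_contra hu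
  have hcl : IsClosed (admPolytope (pluckerSupport A)) :=
    Set.Finite.isClosed_convexHull ℝ (Set.toFinite _)
  obtain ⟨F, b, hF, hb⟩ := geometric_hahn_banach_closed_point (convex_convexHull ℝ _) hcl hu
  have hFs : ∀ v, F v = ∑ k, F (Pi.single k 1) * v k := by
    intro v
    conv_lhs => rw [← Finset.univ_sum_single v]
    rw [map_sum]
    refine Finset.sum_congr rfl fun k _ => ?_
    have : (Pi.single k (v k) : Fin n → ℝ) = v k • Pi.single k 1 := by
      rw [← Pi.single_smul]; simp
    rw [this, map_smul, smul_eq_mul, mul_comm]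
  set g : Fin n → ℝ := fun k => F (Pi.single k 1) - b / 2 with hg
  have hgp : ∀ i j, plucker A i j ≠ 0 → g i + g j ≤ 0 := by
    intro i j hij
    have := hF (vertexOf {i, j}) (subset_convexHull ℝ _ ⟨_, ⟨i, j, plucker_ne hij, rfl, hij⟩, rfl⟩)
    rw [hFs, sum_vertexOf _ (plucker_ne hij)] at this
    simp only [hg]
    linarith
  have hgu : 0 < ∑ k, g k * u k := by
    simp only [hg, sub_mul, Finset.sum_sub_distrib, ← Finset.mul_sum, hsum]
    rw [← hFs]
    linarith
  have hne : (univ : Finset (Fin n)).Nonempty := by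
    by_contra h
    rw [Finset.not_nonempty_iff_eq_empty] at h
    rw [h] at hsum
    simp at hsum
  obtain ⟨m, -, hm⟩ := Finset.exists_max_image univ g hne
  rcases le_or_gt (g m) 0 with hle | hpos
  · have : ∑ k, g k * u k ≤ 0 := Finset.sum_nonpos fun k _ =>
      mul_nonpos_of_nonpos_of_nonneg ((hm k (mem_univ _)).trans hle) (h0 k)
    linarith
  · have hb2 : ∑ k, g k * u k ≤
        ∑ k, (2 * g m * ((if k ∈ cls A m then (1 : ℝ) else 0) * u k) - g m * u k) := by
      apply Finset.sum_le_sum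
      intro k _
      by_cases hk : k ∈ cls A m
      · have := mul_le_mul_of_nonneg_right (hm k (mem_univ _)) (h0 k)
        simp only [hk, if_true]
        linarith
      · have h3 := hgp m k (by rwa [mem_cls] at hk)
        have := mul_le_mul_of_nonneg_right (show g k ≤ - g m by linarith) (h0 k)
        simp only [hk, if_false]
        linarith
    rw [Finset.sum_sub_distrib, ← Finset.mul_sum, ← Finset.mul_sum, ← sum_finset_eq, hsum] at hb2
    have := h1 m
    nlinarith

theorem relint_iff {n : ℕ} (A : Matrix (Fin n) (Fin 2) ℂ) (x : Fin n → ℝ)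
    (hsum : ∑ i, x i = 2) (h0 : ∀ i, 0 < x i) :
    x ∈ intrinsicInterior ℝ (admPolytope (pluckerSupport A)) ↔
      ∀ i, ∑ j ∈ cls A i, x j ≤ 1 ∧ (∑ j ∈ cls A i, x j = 1 ↔ Tight A i) := by
  have htight : ∀ i, A i ≠ 0 → Tight A i → ∀ u ∈ admPolytope (pluckerSupport A),
      ∑ j ∈ cls A i, u j = 1 := by
    intro i hi ht u hu
    rw [sum_finset_eq]
    refine poly_eq A _ _ ?_ hu
    intro j k hjk
    have h1 := ht j k hjk
    have h2 : ¬ (j ∈ cls A i ∧ k ∈ cls A i) := fun h => hjk (not_both hi h.1 h.2)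
    by_cases hj : j ∈ cls A i <;> by_cases hk : k ∈ cls A i <;> simp_all
  constructor
  · intro hx i
    have hxP := intrinsicInterior_subset hx
    have hi : A i ≠ 0 := by
      intro hi
      have := poly_eq A (fun k => if k = i then 1 else 0) 0 ?_ hxP
      · simp at this
        linarith [h0 i]
      · intro j k hjk
        have hj : j ≠ i := by rintro rfl; exact hjk (by simp [plucker, hi])
        have hk : k ≠ i := by rintro rfl; exact hjk (by simp [plucker, hi])
        simp [hj, hk]
    have hle : ∀ u ∈ admPolytope (pluckerSupport A), ∑ j ∈ cls A i, u j ≤ 1 := by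
      intro u hu
      rw [sum_finset_eq]
      refine poly_le A _ _ ?_ hu
      intro j k hjk
      have h2 : ¬ (j ∈ cls A i ∧ k ∈ cls A i) := fun h => hjk (not_both hi h.1 h.2)
      by_cases hj : j ∈ cls A i <;> by_cases hk : k ∈ cls A i <;> simp_all
    refine ⟨hle x hxP, fun h1 => ?_, fun ht => htight i hi ht x hxP⟩
    intro j k hjk
    by_contra hcon
    push Not at hcon
    have hzP : vertexOf {j, k} ∈ admPolytope (pluckerSupport A) :=
      subset_convexHull ℝ _ ⟨_, ⟨j, k, plucker_ne hjk, rfl, hjk⟩, rfl⟩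
    obtain ⟨t, ht, htP⟩ := relint_extend hx hzP
    have h2 := hle _ htP
    have h3 : ∑ l ∈ cls A i, vertexOf ({j, k} : Finset (Fin n)) l = 0 := by
      rw [sum_finset_eq, sum_vertexOf _ (plucker_ne hjk)]
      simp [hcon.1, hcon.2]
    simp only [Pi.add_apply, Pi.smul_apply, Pi.sub_apply, smul_eq_mul, Finset.sum_add_distrib,
      ← Finset.mul_sum, Finset.sum_sub_distrib, h3, h1] at h2
    linarith
  · intro h
    have hxP := mem_poly A x hsum (fun i => (h0 i).le) (fun i => (h i).1)
    have hconv : Convex ℝ (admPolytope (pluckerSupport A)) := convex_convexHull ℝ _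
    obtain ⟨w, hw⟩ := Set.Nonempty.intrinsicInterior hconv ⟨x, hxP⟩
    have hwP := intrinsicInterior_subset hw
    have hwsum : ∑ i, w i = 2 := by
      have := poly_eq A (fun _ => 1) 2 (fun _ _ _ => by norm_num) hwP
      simpa using this
    have hi : ∀ i, A i ≠ 0 := by
      intro i hi
      have : cls A i = univ := by
        ext k; simp [mem_cls, plucker, hi]
      have h2 := (h i).1
      rw [this, hsum] at h2
      norm_num at h2
    have e1 : ∀ᶠ t : ℝ in 𝓝[>] 0, ∀ i, 0 ≤ (x + t • (x - w)) i := by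
      rw [Filter.eventually_all]
      intro i
      have hc : Continuous (fun t : ℝ => (x + t • (x - w)) i) := by
        simp only [Pi.add_apply, Pi.smul_apply]; fun_prop
      have h2 := (hc.tendsto 0).mono_left (nhdsWithin_le_nhds (s := Set.Ioi 0))
      have := h2.eventually (lt_mem_nhds (a := 0) (by simpa using h0 i))
      exact this.mono fun _ h => h.le
    have e2 : ∀ᶠ t : ℝ in 𝓝[>] 0, ∀ i, ∑ j ∈ cls A i, (x + t • (x - w)) j ≤ 1 := by
      rw [Filter.eventually_all]
      intro i
      by_cases ht : Tight A i
      · have h3 := (h i).2.2 ht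
        have h4 := htight i (hi i) ht w hwP
        refine Eventually.of_forall fun t => ?_
        simp only [Pi.add_apply, Pi.smul_apply, Pi.sub_apply, smul_eq_mul, Finset.sum_add_distrib,
          ← Finset.mul_sum, Finset.sum_sub_distrib, h3, h4]
        simp
      · have h3 : ∑ j ∈ cls A i, x j < 1 := lt_of_le_of_ne (h i).1 (fun e => ht ((h i).2.1 e))
        have hc : Continuous (fun t : ℝ => ∑ j ∈ cls A i, (x + t • (x - w)) j) := by
          simp only [Pi.add_apply, Pi.smul_apply]; fun_prop
        have h2 := (hc.tendsto 0).mono_left (nhdsWithin_le_nhds (s := Set.Ioi 0))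
        have := h2.eventually_lt_const (u := 1) (by simpa using h3)
        exact this.mono fun _ h => h.le
    obtain ⟨t, ⟨ha, hb⟩, ht⟩ := ((e1.and e2).and self_mem_nhdsWithin).exists
    refine relint_of_extend hconv hw hxP t ht (mem_poly A _ ?_ ha hb)
    simp only [Pi.add_apply, Pi.smul_apply, Pi.sub_apply, smul_eq_mul, Finset.sum_add_distrib,
      ← Finset.mul_sum, Finset.sum_sub_distrib, hsum, hwsum]
    simp

theorem rank_two {n : ℕ} (A : Matrix (Fin n) (Fin 2) ℂ) (i j : Fin n)
    (h : plucker A i j ≠ 0) : A.rank = 2 := by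
  apply le_antisymm (A.rank_le_width)
  have h1 := A.rank_submatrix_le ![i, j] (Equiv.refl (Fin 2))
  have h2 : (A.submatrix ![i, j] (Equiv.refl (Fin 2))).rank = 2 := by
    rw [Matrix.rank_of_det_ne_zero]
    · simp
    · rw [Matrix.det_fin_two]
      simp only [plucker] at h
      simp
      intro h'
      apply h
      linear_combination h'
  omega

theorem sgn_all {n : ℕ} (x y : Fin n → ℝ)
    (hx : (∑ i, x i) = 2 ∧ ∀ i, 0 < x i ∧ x i < 1)
    (hy : (∑ i, y i) = 2 ∧ ∀ i, 0 < y i ∧ y i < 1)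
    (h : ∀ S : Finset (Fin n), 2 ≤ S.card → S.card ≤ n - 2 →
      (((∑ i ∈ S, x i) < 1 ↔ (∑ i ∈ S, y i) < 1) ∧
       ((∑ i ∈ S, x i) = 1 ↔ (∑ i ∈ S, y i) = 1))) (S : Finset (Fin n)) :
    ((∑ i ∈ S, x i) < 1 ↔ (∑ i ∈ S, y i) < 1) ∧
       ((∑ i ∈ S, x i) = 1 ↔ (∑ i ∈ S, y i) = 1) := by
  have small : ∀ (z : Fin n → ℝ), (∀ i, 0 < z i ∧ z i < 1) → ∀ T : Finset (Fin n), T.card ≤ 1 →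
      ∑ i ∈ T, z i < 1 := by
    intro z hz T hT
    rcases Nat.le_one_iff_eq_zero_or_eq_one.1 hT with h0 | h1
    · rw [Finset.card_eq_zero] at h0; simp [h0]
    · obtain ⟨a, rfl⟩ := Finset.card_eq_one.1 h1
      simpa using (hz a).2
  by_cases h2 : 2 ≤ S.card
  · by_cases h3 : S.card ≤ n - 2
    · exact h S h2 h3
    · have hc : Sᶜ.card ≤ 1 := by
        rw [Finset.card_compl, Fintype.card_fin]; omega
      have a := small x hx.2 _ hc
      have b := small y hy.2 _ hc
      have c := Finset.sum_add_sum_compl S x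
      have d := Finset.sum_add_sum_compl S y
      rw [hx.1] at c
      rw [hy.1] at d
      constructor <;> constructor <;> intro <;> linarith
  · have a := small x hx.2 S (by omega)
    have b := small y hy.2 S (by omega)
    constructor <;> constructor <;> intro <;> linarith

open Classical in
theorem exists_mat_eq {n : ℕ} (S : Finset (Fin n)) (h1 : 2 ≤ S.card) (h2 : S.card ≤ n - 2) (hn : 4 ≤ n) :
    ∃ A : Matrix (Fin n) (Fin 2) ℂ, A.rank = 2 ∧ ∀ x : Fin n → ℝ, (∑ i, x i) = 2 →
      (∀ i, 0 < x i ∧ x i < 1) →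
      (x ∈ intrinsicInterior ℝ (admPolytope (pluckerSupport A)) ↔ ∑ i ∈ S, x i = 1) := by
  set A : Matrix (Fin n) (Fin 2) ℂ := fun i => if i ∈ S then ![1, 0] else ![0, 1] with hA
  have hp : ∀ i j, plucker A i j = 0 ↔ (i ∈ S ↔ j ∈ S) := by
    intro i j
    by_cases hi : i ∈ S <;> by_cases hj : j ∈ S <;> simp [plucker, hA, hi, hj]
  have hcl : ∀ i, cls A i = if i ∈ S then S else Sᶜ := by
    intro i
    ext k
    rw [mem_cls, hp]
    by_cases hi : i ∈ S <;> simp [hi]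
  have htight : ∀ i, Tight A i := by
    intro i j k hjk
    rw [Ne, hp] at hjk
    simp only [mem_cls, hp]
    tauto
  obtain ⟨a, ha⟩ : S.Nonempty := Finset.card_pos.1 (by omega)
  have hcc : Sᶜ.card = n - S.card := by rw [Finset.card_compl, Fintype.card_fin]
  obtain ⟨b, hb⟩ : Sᶜ.Nonempty := Finset.card_pos.1 (by omega)
  rw [Finset.mem_compl] at hb
  refine ⟨A, rank_two A a b ?_, fun x hs hx => ?_⟩
  · rw [Ne, hp]; tauto
  rw [relint_iff A x hs fun i => (hx i).1]
  have c := Finset.sum_add_sum_compl S x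
  rw [hs] at c
  constructor
  · intro h
    have := (h a).2.2 (htight a)
    rwa [hcl, if_pos ha] at this
  · intro h i
    have : ∑ j ∈ cls A i, x j = 1 := by
      rw [hcl]
      split_ifs
      · exact h
      · linarith
    exact ⟨this.le, fun _ => htight i, fun _ => this⟩

open Classical in
theorem exists_mat_lt {n : ℕ} (S : Finset (Fin n)) (h1 : 2 ≤ S.card) (h2 : S.card ≤ n - 2) (hn : 4 ≤ n) :
    ∃ A : Matrix (Fin n) (Fin 2) ℂ, A.rank = 2 ∧ ∀ x : Fin n → ℝ, (∑ i, x i) = 2 →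
      (∀ i, 0 < x i ∧ x i < 1) →
      (x ∈ intrinsicInterior ℝ (admPolytope (pluckerSupport A)) ↔ ∑ i ∈ S, x i < 1) := by
  set A : Matrix (Fin n) (Fin 2) ℂ := fun i => if i ∈ S then ![1, 0] else ![(i : ℕ), 1] with hA
  have hp : ∀ i j, plucker A i j = 0 ↔ ((i ∈ S ∧ j ∈ S) ∨ i = j) := by
    intro i j
    by_cases hi : i ∈ S <;> by_cases hj : j ∈ S <;> simp [plucker, hA, hi, hj, sub_eq_zero, Fin.ext_iff]
    · intro h; exact absurd hi (Fin.ext h ▸ hj)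
    · intro h; exact absurd hj (Fin.ext h ▸ hi)
  have hcl : ∀ i, cls A i = if i ∈ S then S else {i} := by
    intro i
    ext k
    rw [mem_cls, hp]
    by_cases hi : i ∈ S <;> simp [hi]
    · rintro rfl; exact hi
    · exact eq_comm
  obtain ⟨a, ha⟩ : S.Nonempty := Finset.card_pos.1 (by omega)
  have hcc : Sᶜ.card = n - S.card := by rw [Finset.card_compl, Fintype.card_fin]
  obtain ⟨b, hb, c, hc, hbc⟩ := Finset.one_lt_card.1 (show 1 < Sᶜ.card by omega)
  rw [Finset.mem_compl] at hb hc
  have htight : ∀ i, ¬ Tight A i := by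
    intro i ht
    by_cases hi : i ∈ S
    · have := ht b c (by rw [Ne, hp]; tauto)
      simp only [hcl, if_pos hi] at this
      tauto
    · have hab : a ≠ b := by rintro rfl; exact hb ha
      have hac : a ≠ c := by rintro rfl; exact hc ha
      have hai : a ≠ i := by rintro rfl; exact hi ha
      have t1 := ht a b (by rw [Ne, hp]; tauto)
      have t2 := ht a c (by rw [Ne, hp]; tauto)
      simp only [hcl, if_neg hi, Finset.mem_singleton] at t1 t2
      have e1 := t1.resolve_left hai
      have e2 := t2.resolve_left hai
      exact hbc (e1.trans e2.symm)
  refine ⟨A, rank_two A b c ?_, fun x hs hx => ?_⟩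
  · rw [Ne, hp]; tauto
  rw [relint_iff A x hs fun i => (hx i).1]
  constructor
  · intro h
    have := lt_of_le_of_ne (h a).1 fun e => htight a ((h a).2.1 e)
    rwa [hcl, if_pos ha] at this
  · intro h i
    have : ∑ j ∈ cls A i, x j < 1 := by
      rw [hcl]
      split_ifs
      · exact h
      · simpa using (hx i).2
    exact ⟨this.le, fun e => absurd e this.ne, fun t => absurd t (htight i)⟩

end helpers

/-- two interior points of Δ_{n,2} lie in the relative
(intrinsic) interiors of exactly the same admissible polytopes of G_{n,2} iff
they lie on the same side (strictly below, on, or strictly above) of every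
hyperplane ∑_{i∈S} x_i = 1 with 2 ≤ |S| ≤ n−2. -/
theorem stmt15 (n : ℕ) (hn : 4 ≤ n) (x y : Fin n → ℝ)
    (hx : (∑ i, x i) = 2 ∧ ∀ i, 0 < x i ∧ x i < 1)
    (hy : (∑ i, y i) = 2 ∧ ∀ i, 0 < y i ∧ y i < 1) :
    (∀ σ : Set (Finset (Fin n)), IsAdmissible σ →
      (x ∈ intrinsicInterior ℝ (admPolytope σ) ↔
       y ∈ intrinsicInterior ℝ (admPolytope σ))) ↔
    (∀ S : Finset (Fin n), 2 ≤ S.card → S.card ≤ n - 2 →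
      (((∑ i ∈ S, x i) < 1 ↔ (∑ i ∈ S, y i) < 1) ∧
       ((∑ i ∈ S, x i) = 1 ↔ (∑ i ∈ S, y i) = 1))) := by
  constructor
  · intro h S h1 h2
    constructor
    · obtain ⟨A, hr, hA⟩ := exists_mat_lt S h1 h2 hn
      rw [← hA x hx.1 hx.2, ← hA y hy.1 hy.2]
      exact h _ ⟨A, hr, rfl⟩
    · obtain ⟨A, hr, hA⟩ := exists_mat_eq S h1 h2 hn
      rw [← hA x hx.1 hx.2, ← hA y hy.1 hy.2]
      exact h _ ⟨A, hr, rfl⟩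
  · rintro h σ ⟨A, -, rfl⟩
    rw [relint_iff A x hx.1 fun i => (hx.2 i).1, relint_iff A y hy.1 fun i => (hy.2 i).1]
    refine forall_congr' fun i => ?_
    have := sgn_all x y hx hy h (cls A i)
    rw [le_iff_lt_or_eq, le_iff_lt_or_eq, this.1, this.2]
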